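/- arXiv:1905.10772 — 2 statements merged into one kernel-verified Lean document; each statement's English description precedes it below -/
import Mathlib

section
/- Let α, β ∈ K with αβ ≠ 0, α^q ≠ β^{q+1} and β^q α^{q^3+1} ≠ 1, and suppose α^{q^4} β^{q^2+q+1} − α^{q^4+q^2} β − α^{q^4+q} β^{q^2} + N(α) − β^q α^{q^3+1} + 1 = 0. Then L_{α,β} is maximum scattered if and only if N( α^{q^3} (β^{q+1} − α^q) / (β^q α^{q^3+1} − 1) ) ≠ 1, i.e. if and only if N(α^{q^3}) · N(β^{q+1} − α^q) ≠ N(β^q α^{q^3+1} − 1). -/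
/-- The `F`-linear map `T_{α,β} : K → K²`, `x ↦ (x − α x^{q²}, x^q − β x^{q²})`. -/
def Tmap (q : ℕ) {K : Type*} [Field K] (α β : K) (x : K) : K × K :=
  (x - α * x ^ q ^ 2, x ^ q - β * x ^ q ^ 2)

/-- The linear set `L_{α,β}` is maximum scattered: `T_{α,β}` is injective and
`K`-linear dependence of `T_{α,β}(x)` and `T_{α,β}(y)` for nonzero `x, y` forces
`y/x ∈ F`. -/
def IsMaxScattered (q : ℕ) {K : Type*} [Field K] (F : Subfield K) (α β : K) : Prop :=
  Function.Injective (Tmap q α β) ∧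
    ∀ x y : K, x ≠ 0 → y ≠ 0 →
      ¬ LinearIndependent K ![Tmap q α β x, Tmap q α β y] → y / x ∈ F

/-! Let `σ` be the `q`-Frobenius; all that matters is that `σ⁵ = 1`. The closed condition on
`(α, β)` forces `r α = d · σ d` and `r β = -(1 + r) σ d` for some `d` of norm `r`, so that in terms
of the semilinear map `τ z = d · σ z`, which satisfies `τ⁵ = r`, the components of `T_{α,β}` are
multiples of `r - τ²` and `r τ + (1 + r) τ²`.

A dependence between `T_{α,β}(x)` and `T_{α,β}(y)` is then a linear relation between the Plücker
coordinates of the two orbits `τⁱ x`, `τⁱ y`. Together with the Plücker relation it yields five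
cyclically permuted quadrics in the coordinates `τⁱ x ∧ τⁱ⁺¹ y`. Their span contains a product of
two shifts of a single linear form, so that form vanishes along the whole orbit; hence so do the
coordinates, and in particular `x · σ y - σ x · y = 0`, i.e. `σ` fixes `y / x`.

In terms of `r` the norm quotient is `-1 / r`, and `r ≠ -1`: under the closed condition the linear
set is always scattered and the norm inequality always holds.
-/

section CyclicNorm

/-- The norm `x · σ x ⋯ σⁿ⁻¹ x`; when `σ` is an automorphism of order `n` of a field, this is the
norm down to the field fixed by `σ`. -/
def cyclicNorm {R : Type*} [CommRing R] (σ : R →+* R) (n : ℕ) : R →* R where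
  toFun x := ∏ i ∈ Finset.range n, σ^[i] x
  map_one' := by simp only [iterate_map_one, Finset.prod_const_one]
  map_mul' x y := by simp only [iterate_map_mul, Finset.prod_mul_distrib]

variable {R : Type*} [CommRing R] {σ : R →+* R} {n : ℕ}

lemma cyclicNorm_apply (x : R) : cyclicNorm σ n x = ∏ i ∈ Finset.range n, σ^[i] x := rfl

lemma cyclicNorm_five (x : R) :
    cyclicNorm σ 5 x = x * σ x * σ (σ x) * σ (σ (σ x)) * σ (σ (σ (σ x))) := by
  simp only [cyclicNorm_apply, Finset.prod_range_succ, Finset.prod_range_zero, one_mul,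
    Function.iterate_succ_apply, Function.iterate_zero_apply]

lemma cyclicNorm_of_map_eq_self {x : R} (hx : σ x = x) : cyclicNorm σ n x = x ^ n := by
  simp only [cyclicNorm_apply, Function.iterate_fixed hx, Finset.prod_const, Finset.card_range]

lemma cyclicNorm_map {x : R} (hx : σ^[n] x = x) : cyclicNorm σ n (σ x) = cyclicNorm σ n x := by
  cases n with
  | zero => rfl
  | succ n =>
    simp only [cyclicNorm_apply, ← Function.iterate_succ_apply]
    rw [Finset.prod_range_succ, hx, Finset.prod_range_succ', Function.iterate_zero_apply]

lemma map_cyclicNorm {x : R} (hx : σ^[n] x = x) : σ (cyclicNorm σ n x) = cyclicNorm σ n x := by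
  conv_rhs => rw [← cyclicNorm_map hx]
  simp only [cyclicNorm_apply, map_prod, ← Function.iterate_succ_apply,
    ← Function.iterate_succ_apply']

lemma iterate_eq_pow {q : ℕ} (hσ : ∀ x, σ x = x ^ q) (k : ℕ) (x : R) : σ^[k] x = x ^ q ^ k := by
  simp only [funext hσ, pow_iterate]

lemma cyclicNorm_eq_pow {q : ℕ} (hσ : ∀ x, σ x = x ^ q) (x : R) :
    cyclicNorm σ n x = x ^ ∑ i ∈ Finset.range n, q ^ i := by
  simp only [cyclicNorm_apply, iterate_eq_pow hσ, Finset.prod_pow_eq_pow_sum]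

end CyclicNorm

section TwistedOrbit

/-- `X` is an orbit of the `σ`-semilinear map `z ↦ d * σ z`. -/
def IsTwistedOrbit {R : Type*} [CommRing R] (σ : R →+* R) (d : R) (X : ℕ → R) : Prop :=
  ∀ i, X (i + 1) = d * σ (X i)

/-- The Plücker coordinate `X i ∧ X (i + k)` of the two sequences `X`, `Y`. -/
def plucker {R : Type*} [CommRing R] (X Y : ℕ → R) (k i : ℕ) : R :=
  X i * Y (i + k) - X (i + k) * Y i

namespace IsTwistedOrbit

variable {R : Type*} [CommRing R] {σ : R →+* R} {d e : R} {X Y : ℕ → R}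

lemma iterate (σ : R →+* R) (d x : R) : IsTwistedOrbit σ d fun i ↦ (fun z ↦ d * σ z)^[i] x :=
  fun i ↦ Function.iterate_succ_apply' _ i x

lemma shift (hX : IsTwistedOrbit σ d X) (k : ℕ) : IsTwistedOrbit σ d fun i ↦ X (i + k) :=
  fun i ↦ by simp only [Nat.add_right_comm i 1 k, hX (i + k)]

lemma mul (hX : IsTwistedOrbit σ d X) (hY : IsTwistedOrbit σ e Y) :
    IsTwistedOrbit σ (d * e) fun i ↦ X i * Y i :=
  fun i ↦ by simp only [hX i, hY i, map_mul, mul_mul_mul_comm]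

lemma add (hX : IsTwistedOrbit σ d X) (hY : IsTwistedOrbit σ d Y) :
    IsTwistedOrbit σ d fun i ↦ X i + Y i :=
  fun i ↦ by simp only [hX i, hY i, map_add, mul_add]

lemma sub (hX : IsTwistedOrbit σ d X) (hY : IsTwistedOrbit σ d Y) :
    IsTwistedOrbit σ d fun i ↦ X i - Y i :=
  fun i ↦ by simp only [hX i, hY i, map_sub, mul_sub]

lemma const_mul {c : R} (hc : σ c = c) (hX : IsTwistedOrbit σ d X) :
    IsTwistedOrbit σ d fun i ↦ c * X i :=
  fun i ↦ by simp only [hX i, map_mul, hc, mul_left_comm]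

lemma plucker (hX : IsTwistedOrbit σ d X) (hY : IsTwistedOrbit σ d Y) (k : ℕ) :
    IsTwistedOrbit σ (d * d) (plucker X Y k) :=
  (hX.mul (hY.shift k)).sub ((hX.shift k).mul hY)

lemma apply_add (hX : IsTwistedOrbit σ d X) (n i : ℕ) :
    X (i + n) = cyclicNorm σ n d * σ^[n] (X i) := by
  induction n generalizing i with
  | zero => simp only [cyclicNorm_apply, Finset.prod_range_zero, one_mul, add_zero,
      Function.iterate_zero_apply]
  | succ n ih =>
    rw [← add_assoc, Nat.add_right_comm, ih, hX i, iterate_map_mul, cyclicNorm_apply,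
      cyclicNorm_apply, Finset.prod_range_succ, Function.iterate_succ_apply, mul_assoc]

lemma apply_eq_zero_iff {K : Type*} [Field K] {σ : K →+* K} {d : K} {X : ℕ → K}
    (hX : IsTwistedOrbit σ d X) (hd : d ≠ 0) (i j : ℕ) : X i = 0 ↔ X j = 0 := by
  have apply_iff_zero (k : ℕ) : X k = 0 ↔ X 0 = 0 := by
    induction k with
    | zero => rfl
    | succ k ih => rw [hX, mul_eq_zero_iff_left hd, map_eq_zero, ih]
  rw [apply_iff_zero i, apply_iff_zero j]

end IsTwistedOrbit

end TwistedOrbit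

section PluckerQuadrics

variable {R : Type*} [CommRing R] {r : R} {X Y U : ℕ → R}

/-- The quadric in the coordinates `U i = X i ∧ X (i + 1)` obtained from the Plücker relation by
eliminating all the other Plücker coordinates. -/
def quadricForm (r : R) (U : ℕ → R) (i : ℕ) : R :=
  r * (1 + r + r ^ 2) * U i * U (i + 2)
    - U (i + 1) * (r ^ 3 * U i + r ^ 2 * U (i + 1) + r * U (i + 2)
      - (1 + r) * (r * U (i + 3) + U (i + 4)))

/-- The linear form such that the five cyclic shifts of `quadricForm` span a product of two of its
shifts. -/
def linearForm (r : R) (U : ℕ → R) (i : ℕ) : R :=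
  U (i + 4) + r * U (i + 3) + r ^ 2 * U (i + 2) + r ^ 3 * U (i + 1) - (r ^ 2 + r ^ 3) * U i

lemma plucker_relation (X Y : ℕ → R) (i : ℕ) :
    plucker X Y 1 i * plucker X Y 1 (i + 2) - plucker X Y 2 i * plucker X Y 2 (i + 1)
      + plucker X Y 3 i * plucker X Y 1 (i + 1) = 0 := by
  simp only [plucker, add_assoc, Nat.reduceAdd]
  ring

lemma plucker_two_add_three (hX : ∀ i, X (i + 5) = r * X i) (hY : ∀ i, Y (i + 5) = r * Y i)
    (i : ℕ) : plucker X Y 2 (i + 3) = -r * plucker X Y 3 i := by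
  simp only [plucker, add_assoc, Nat.reduceAdd, hX, hY]
  ring

lemma quadricForm_plucker_eq_zero
    (hX : ∀ i, X (i + 5) = r * X i) (hY : ∀ i, Y (i + 5) = r * Y i)
    (h : ∀ i, r * plucker X Y 1 i + plucker X Y 1 (i + 1) + (1 + r) * plucker X Y 2 i = 0)
    (i : ℕ) : quadricForm r (plucker X Y 1) i = 0 := by
  have h₁ := h (i + 1)
  have h₃ := h (i + 3)
  rw [plucker_two_add_three hX hY] at h₃
  simp only [add_assoc, Nat.reduceAdd] at h₁ h₃
  unfold quadricForm
  linear_combination (1 + r) ^ 2 * r * plucker_relation X Y i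
    + r * (1 + r) * plucker X Y 2 (i + 1) * h i
    - r * (r * plucker X Y 1 i + plucker X Y 1 (i + 1)) * h₁
    + (1 + r) * plucker X Y 1 (i + 1) * h₃

lemma linearForm_mul_linearForm (hU : ∀ i, U (i + 5) = r ^ 2 * U i) :
    r * (linearForm r U 0 * linearForm r U 2) =
      -r ^ 4 * quadricForm r U 0 + r ^ 3 * (1 + r) * quadricForm r U 1 - r ^ 3 * quadricForm r U 2
        - r * quadricForm r U 3 + (1 + r) * quadricForm r U 4 := by
  have h₅ : U 5 = r ^ 2 * U 0 := hU 0
  have h₆ : U 6 = r ^ 2 * U 1 := hU 1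
  have h₇ : U 7 = r ^ 2 * U 2 := hU 2
  have h₈ : U 8 = r ^ 2 * U 3 := hU 3
  simp only [linearForm, quadricForm, Nat.reduceAdd, h₅, h₆, h₇, h₈]
  ring

lemma IsTwistedOrbit.linearForm {σ : R →+* R} {d : R} (hr : σ r = r) (hU : IsTwistedOrbit σ d U) :
    IsTwistedOrbit σ d (linearForm r U) := by
  have hpow (k : ℕ) : σ (r ^ k) = r ^ k := by rw [map_pow, hr]
  have hsum : σ (r ^ 2 + r ^ 3) = r ^ 2 + r ^ 3 := by rw [map_add, hpow, hpow]
  exact ((((hU.shift 4).add ((hU.shift 3).const_mul hr)).add ((hU.shift 2).const_mul (hpow 2))).add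
    ((hU.shift 1).const_mul (hpow 3))).sub (hU.const_mul hsum)

lemma eq_zero_of_linearForm_eq_zero [NoZeroDivisors R] (hr : r ≠ 0) (hr₁ : 1 + r ≠ 0)
    (hr₂ : 1 + r + r ^ 2 ≠ 0) (hU : ∀ i, U (i + 5) = r ^ 2 * U i)
    (h : ∀ i, linearForm r U i = 0) (i : ℕ) : U i = 0 := by
  simp only [linearForm] at h
  have hsucc (j : ℕ) : U (j + 1) = U j := by
    have hj := h (j + 1)
    simp only [add_assoc, Nat.reduceAdd, hU] at hj
    have hprod : r ^ 2 * (1 + r + r ^ 2) * (U (j + 1) - U j) = 0 := by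
      linear_combination r * h j - hj
    exact sub_eq_zero.mp ((mul_eq_zero_iff_left (mul_ne_zero (pow_ne_zero 2 hr) hr₂)).mp hprod)
  have hconst := h i
  rw [hsucc (i + 3), hsucc (i + 2), hsucc (i + 1), hsucc i] at hconst
  exact (mul_eq_zero_iff_left hr₁).mp (by linear_combination hconst)

end PluckerQuadrics

section Scattered

variable {K : Type*} [Field K] {σ : K →+* K} {α β : K}

/-- The map `x ↦ (x − α σ²x, σx − β σ²x)`, which is `T_{α,β}` with an arbitrary field endomorphism
`σ` in place of the `q`-Frobenius. -/
def twistedTmap (σ : K →+* K) (α β : K) : K →+ K × K where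
  toFun x := (x - α * σ^[2] x, σ x - β * σ^[2] x)
  map_zero' := by simp only [iterate_map_zero, map_zero, mul_zero, sub_zero, Prod.mk_zero_zero]
  map_add' x y := by
    simp only [iterate_map_add, map_add, Prod.mk_add_mk]
    ring_nf

lemma twistedTmap_apply (x : K) :
    twistedTmap σ α β x = (x - α * σ (σ x), σ x - β * σ (σ x)) := rfl

/-- `T` defines a maximum scattered linear set over the fixed field of `σ`. -/
def IsScattered (σ : K →+* K) (T : K → K × K) : Prop :=
  Function.Injective T ∧
    ∀ x y : K, x ≠ 0 → y ≠ 0 → ¬ LinearIndependent K ![T x, T y] → σ (y / x) = y / x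

lemma isMaxScattered_iff_isScattered {q : ℕ} {F : Subfield K} (hσ : ∀ x, σ x = x ^ q)
    (hF : ∀ x, x ∈ F ↔ σ x = x) :
    IsMaxScattered q F α β ↔ IsScattered σ (twistedTmap σ α β) := by
  have hT : Tmap q α β = twistedTmap σ α β := by
    funext x
    simp only [Tmap, twistedTmap_apply, hσ, ← pow_mul, sq]
  simp only [IsMaxScattered, IsScattered, hT, hF]

lemma linearIndependent_pair_of_det_ne_zero {R : Type*} [CommRing R] [NoZeroDivisors R]
    {v w : R × R} (h : v.1 * w.2 - v.2 * w.1 ≠ 0) : LinearIndependent R ![v, w] := by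
  refine LinearIndependent.pair_iff.mpr fun a b hab ↦ ?_
  have h₁ : a * v.1 + b * w.1 = 0 := congrArg Prod.fst hab
  have h₂ : a * v.2 + b * w.2 = 0 := congrArg Prod.snd hab
  constructor
  · exact (mul_eq_zero_iff_right h).mp (by linear_combination w.2 * h₁ - w.1 * h₂)
  · exact (mul_eq_zero_iff_right h).mp (by linear_combination v.1 * h₂ - v.2 * h₁)

lemma twistedTmap_injective (hne : σ α ≠ σ β * β) : Function.Injective (twistedTmap σ α β) := by
  refine (injective_iff_map_eq_zero _).mpr fun x hx ↦ ?_
  obtain ⟨hx₁, hx₂⟩ := Prod.mk_eq_zero.mp hx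
  have hσx₁ := congrArg σ hx₁
  have hσx₂ := congrArg σ hx₂
  simp only [map_sub, map_mul, map_zero, Function.iterate_succ_apply,
    Function.iterate_zero_apply] at hx₂ hσx₁ hσx₂
  have hprod : (σ α - σ β * β) * σ (σ (σ x)) = 0 := by
    linear_combination hx₂ - hσx₁ + β * hσx₂
  simpa only [map_eq_zero] using (mul_eq_zero_iff_left (sub_ne_zero.mpr hne)).mp hprod

lemma map_div_eq_self {x y : K} (hx : x ≠ 0) (h : x * σ y - σ x * y = 0) :
    σ (y / x) = y / x := by
  rw [map_div₀, div_eq_div_iff ((map_ne_zero σ).mpr hx) hx]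
  linear_combination h

end Scattered

section TwistParameter

/-- `d`, of norm `r`, brings `T_{α,β}` into normal form: with `τ z = d * σ z`, so that `τ⁵ = r`, the
components of `T_{α,β}` are proportional to `r − τ²` and `r τ + (1 + r) τ²`. -/
structure IsTwistParameter {K : Type*} [Field K] (σ : K →+* K) (α β d r : K) : Prop where
  norm_eq : cyclicNorm σ 5 d = r
  ne_zero : r ≠ 0
  one_add_ne_zero : 1 + r ≠ 0
  one_add_add_sq_ne_zero : 1 + r + r ^ 2 ≠ 0
  mul_left : r * α = d * σ d
  mul_right : r * β = -(1 + r) * σ d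

/-- The expression whose vanishing is the closed condition on `(α, β)` in `stmt_9`, with `σ` in
place of the `q`-Frobenius. -/
def criticalForm {K : Type*} [Field K] (σ : K →+* K) (α β : K) : K :=
  σ^[4] α * (σ^[2] β * σ β * β) - σ^[4] α * σ^[2] α * β - σ^[4] α * σ α * σ^[2] β
    + cyclicNorm σ 5 α - σ β * (σ^[3] α * α) + 1

variable {K : Type*} [Field K] {σ : K →+* K} {α β g n k d r : K}

lemma cross_relation_of_criticalForm_eq_zero (hσ : ∀ x, σ^[5] x = x) (hne : σ α ≠ σ β * β)
    (h : criticalForm σ α β = 0) :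
    σ (σ (σ (σ α))) * σ (σ β) = σ (σ (σ α)) * σ (σ (σ (σ β))) := by
  have hσ₅ (x : K) : σ (σ (σ (σ (σ x)))) = x := hσ x
  simp only [criticalForm, cyclicNorm_five, Function.iterate_succ_apply,
    Function.iterate_zero_apply] at h
  have hσh := congrArg (fun z ↦ σ (σ (σ (σ z)))) h
  simp only [map_add, map_sub, map_mul, map_one, map_zero, hσ₅] at hσh
  apply mul_right_cancel₀ (sub_ne_zero.mpr hne.symm)
  linear_combination h - hσh

lemma exists_fixed_eq_mul (hσ : ∀ x, σ^[5] x = x) (hβ : β ≠ 0)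
    (h : σ (σ (σ (σ α))) * σ (σ β) = σ (σ (σ α)) * σ (σ (σ (σ β)))) :
    ∃ g, σ g = g ∧ α = g * (β * σ (σ (σ (σ β)))) := by
  have hσ₅ (x : K) : σ (σ (σ (σ (σ x)))) = x := hσ x
  have hβ₁ : σ β ≠ 0 := (map_ne_zero σ).mpr hβ
  have hβ₄ : σ (σ (σ (σ β))) ≠ 0 := by simpa only [map_ne_zero] using hβ
  have hσh := congrArg (fun z ↦ σ (σ z)) h
  simp only [map_mul, hσ₅] at hσh
  refine ⟨α / (β * σ (σ (σ (σ β)))), ?_, (div_mul_cancel₀ _ (mul_ne_zero hβ hβ₄)).symm⟩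
  rw [map_div₀, map_mul, hσ₅, div_eq_div_iff (mul_ne_zero hβ₁ hβ) (mul_ne_zero hβ hβ₄)]
  linear_combination β * hσh

lemma criticalForm_of_eq_mul (hσ : ∀ x, σ^[5] x = x) (hg : σ g = g)
    (hα : α = g * (β * σ (σ (σ (σ β))))) :
    criticalForm σ α β =
      1 + (g - 3 * g ^ 2) * cyclicNorm σ 5 β + g ^ 5 * cyclicNorm σ 5 β ^ 2 := by
  have hσ₅ (x : K) : σ (σ (σ (σ (σ x)))) = x := hσ x
  simp only [criticalForm, cyclicNorm_five, Function.iterate_succ_apply,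
    Function.iterate_zero_apply, hα, map_mul, hg, hσ₅]
  ring

/- As a quadratic equation in `1 / n`, the relation between `g` and `n` has the roots `-k³ g` and
`-(1 - k)³ g`, where `g = k (1 - k)`. Both lie in the fixed field, and solving for `k` gives the
rational expression below. -/
lemma exists_fixed_parametrization (hg : σ g = g) (hn : σ n = n) (hg₁ : 1 - g ≠ 0)
    (h : 1 + (g - 3 * g ^ 2) * n + g ^ 5 * n ^ 2 = 0) :
    ∃ k, σ k = k ∧ k * (1 - k) = g ∧ n * k ^ 4 * (1 - k) = -1 := by
  have hg₀ : g ≠ 0 := by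
    rintro rfl
    simp at h
  have hn₀ : n ≠ 0 := by
    rintro rfl
    simp at h
  have hden : g * (1 - g) * n ≠ 0 := mul_ne_zero (mul_ne_zero hg₀ hg₁) hn₀
  obtain ⟨k, hk⟩ : ∃ k, k = (g ^ 2 * n - 1) / (g * (1 - g) * n) := ⟨_, rfl⟩
  have hkn : g * (1 - g) * n * k = g ^ 2 * n - 1 := by rw [hk, mul_div_cancel₀ _ hden]
  have hkg : k * (1 - k) = g := by
    apply mul_left_cancel₀ (pow_ne_zero 2 hden)
    linear_combination (g * (1 - g) * n - g * (1 - g) * n * k - (g ^ 2 * n - 1)) * hkn - h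
  refine ⟨k, ?_, hkg, ?_⟩
  · simp only [hk, map_div₀, map_mul, map_sub, map_pow, map_one, hg, hn]
  · linear_combination (n * k ^ 3 - n * g * (k + 1)) * hkg + hkn

lemma isTwistParameter_of_parametrization (hσ : ∀ x, σ^[5] x = x) (hk : σ k = k)
    (hne : 1 - k * (1 - k) ≠ 0) (hα : α = k * (1 - k) * (β * σ (σ (σ (σ β)))))
    (hn : cyclicNorm σ 5 β * k ^ 4 * (1 - k) = -1) :
    IsTwistParameter σ α β (-k * σ (σ (σ (σ β)))) (k / (1 - k)) := by
  have hσ₅ (x : K) : σ (σ (σ (σ (σ x)))) = x := hσ x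
  have hk₀ : k ≠ 0 := by
    rintro rfl
    simp at hn
  have hk₁ : 1 - k ≠ 0 := by
    intro h
    simp [h] at hn
  have hσk : σ (-k) = -k := by rw [map_neg, hk]
  have hnorm : cyclicNorm σ 5 (σ (σ (σ (σ β)))) = cyclicNorm σ 5 β := by
    simp only [cyclicNorm_map (hσ _)]
  have hsucc : 1 + k / (1 - k) = 1 / (1 - k) := by
    field_simp
    ring
  have hquad : 1 + k / (1 - k) + (k / (1 - k)) ^ 2 = (1 - k * (1 - k)) / (1 - k) ^ 2 := by
    field_simp
    ring
  constructor
  · rw [map_mul, cyclicNorm_of_map_eq_self hσk, hnorm, eq_div_iff hk₁]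
    linear_combination -k * hn
  · exact div_ne_zero hk₀ hk₁
  · exact hsucc ▸ one_div_ne_zero hk₁
  · exact hquad ▸ div_ne_zero hne (pow_ne_zero 2 hk₁)
  · rw [hα, map_mul, hσk, hσ₅]
    field_simp
  · rw [hsucc, map_mul, hσk, hσ₅]
    ring

lemma exists_isTwistParameter (hσ : ∀ x, σ^[5] x = x) (hβ : β ≠ 0) (hne : σ α ≠ σ β * β)
    (h : criticalForm σ α β = 0) : ∃ d r, IsTwistParameter σ α β d r := by
  obtain ⟨g, hg, hα⟩ :=
    exists_fixed_eq_mul hσ hβ (cross_relation_of_criticalForm_eq_zero hσ hne h)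
  have hg₁ : 1 - g ≠ 0 := by
    intro hg₁
    apply hne
    rw [hα, map_mul, hg, map_mul, show σ (σ (σ (σ (σ β)))) = β from hσ β]
    linear_combination -σ β * β * hg₁
  rw [criticalForm_of_eq_mul hσ hg hα] at h
  obtain ⟨k, hk, rfl, hn⟩ := exists_fixed_parametrization hg (map_cyclicNorm (hσ β)) hg₁ h
  exact ⟨_, _, isTwistParameter_of_parametrization hσ hk hg₁ hα hn⟩

namespace IsTwistParameter

lemma map_eq_self (hd : IsTwistParameter σ α β d r) (hσ : ∀ x, σ^[5] x = x) : σ r = r :=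
  hd.norm_eq ▸ map_cyclicNorm (hσ d)

lemma param_ne_zero (hd : IsTwistParameter σ α β d r) : d ≠ 0 := by
  rintro rfl
  apply hd.ne_zero
  rw [← hd.norm_eq, cyclicNorm_five, zero_mul, zero_mul, zero_mul, zero_mul]

lemma plucker_linear_relation (hd : IsTwistParameter σ α β d r) (hσ : ∀ x, σ^[5] x = x)
    {X Y : ℕ → K} (hX : IsTwistedOrbit σ d X) (hY : IsTwistedOrbit σ d Y)
    (hdet : (twistedTmap σ α β (X 0)).1 * (twistedTmap σ α β (Y 0)).2
      - (twistedTmap σ α β (X 0)).2 * (twistedTmap σ α β (Y 0)).1 = 0) (i : ℕ) :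
    r * plucker X Y 1 i + plucker X Y 1 (i + 1) + (1 + r) * plucker X Y 2 i = 0 := by
  have hr := hd.map_eq_self hσ
  have hr₁ : σ (1 + r) = 1 + r := by rw [map_add, map_one, hr]
  have horbit : IsTwistedOrbit σ (d * d) fun i ↦
      r * plucker X Y 1 i + plucker X Y 1 (i + 1) + (1 + r) * plucker X Y 2 i :=
    (((hX.plucker hY 1).const_mul hr).add ((hX.plucker hY 1).shift 1)).add
      ((hX.plucker hY 2).const_mul hr₁)
  refine (horbit.apply_eq_zero_iff (mul_ne_zero hd.param_ne_zero hd.param_ne_zero) i 0).mpr ?_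
  simp only [twistedTmap_apply] at hdet
  simp only [plucker, zero_add, Nat.reduceAdd, hX 0, hX 1, hY 0, hY 1, map_mul]
  linear_combination r * d * hdet
    + d * (σ (σ (X 0)) * σ (Y 0) - σ (X 0) * σ (σ (Y 0))) * hd.mul_left
    + d * (X 0 * σ (σ (Y 0)) - σ (σ (X 0)) * Y 0) * hd.mul_right

lemma plucker_one_eq_zero (hd : IsTwistParameter σ α β d r) (hσ : ∀ x, σ^[5] x = x)
    {X Y : ℕ → K} (hX : IsTwistedOrbit σ d X) (hY : IsTwistedOrbit σ d Y)
    (h : ∀ i, r * plucker X Y 1 i + plucker X Y 1 (i + 1) + (1 + r) * plucker X Y 2 i = 0)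
    (i : ℕ) : plucker X Y 1 i = 0 := by
  have hX₅ (i : ℕ) : X (i + 5) = r * X i := by rw [hX.apply_add, hσ, hd.norm_eq]
  have hY₅ (i : ℕ) : Y (i + 5) = r * Y i := by rw [hY.apply_add, hσ, hd.norm_eq]
  have hU := hX.plucker hY 1
  have hU₅ (i : ℕ) : plucker X Y 1 (i + 5) = r ^ 2 * plucker X Y 1 i := by
    rw [hU.apply_add, hσ, map_mul, hd.norm_eq, sq]
  have hprod : linearForm r (plucker X Y 1) 0 * linearForm r (plucker X Y 1) 2 = 0 := by
    refine (mul_eq_zero_iff_left hd.ne_zero).mp ?_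
    simp only [linearForm_mul_linearForm hU₅, quadricForm_plucker_eq_zero hX₅ hY₅ h, mul_zero,
      add_zero, sub_zero]
  have hzero := (hU.linearForm (hd.map_eq_self hσ)).apply_eq_zero_iff
    (mul_ne_zero hd.param_ne_zero hd.param_ne_zero)
  have hlin (i : ℕ) : linearForm r (plucker X Y 1) i = 0 :=
    (mul_eq_zero.mp hprod).elim (hzero i 0).mpr (hzero i 2).mpr
  exact eq_zero_of_linearForm_eq_zero hd.ne_zero hd.one_add_ne_zero hd.one_add_add_sq_ne_zero
    hU₅ hlin i

lemma wronskian_eq_zero (hd : IsTwistParameter σ α β d r) (hσ : ∀ x, σ^[5] x = x) {x y : K}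
    (hdet : (twistedTmap σ α β x).1 * (twistedTmap σ α β y).2
      - (twistedTmap σ α β x).2 * (twistedTmap σ α β y).1 = 0) :
    x * σ y - σ x * y = 0 := by
  have hX := IsTwistedOrbit.iterate σ d x
  have hY := IsTwistedOrbit.iterate σ d y
  have hU : x * (d * σ y) - d * σ x * y = 0 :=
    hd.plucker_one_eq_zero hσ hX hY (hd.plucker_linear_relation hσ hX hY hdet) 0
  exact (mul_eq_zero_iff_left hd.param_ne_zero).mp (by linear_combination hU)

lemma isScattered (hd : IsTwistParameter σ α β d r) (hσ : ∀ x, σ^[5] x = x)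
    (hne : σ α ≠ σ β * β) : IsScattered σ (twistedTmap σ α β) := by
  refine ⟨twistedTmap_injective hne, fun x y hx _ hdep ↦ map_div_eq_self hx ?_⟩
  exact hd.wronskian_eq_zero hσ (not_not.mp (mt linearIndependent_pair_of_det_ne_zero hdep))

lemma pow_mul_cyclicNorm_left (hd : IsTwistParameter σ α β d r) (hσ : ∀ x, σ^[5] x = x) :
    r ^ 3 * cyclicNorm σ 5 α = 1 := by
  have hN := congrArg (cyclicNorm σ 5) hd.mul_left
  simp only [map_mul, cyclicNorm_of_map_eq_self (hd.map_eq_self hσ), cyclicNorm_map (hσ _),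
    hd.norm_eq] at hN
  apply mul_left_cancel₀ (pow_ne_zero 2 hd.ne_zero)
  linear_combination hN

lemma map_one_add_add_sq (hd : IsTwistParameter σ α β d r) (hσ : ∀ x, σ^[5] x = x) :
    σ (1 + r + r ^ 2) = 1 + r + r ^ 2 := by
  simp only [map_add, map_pow, map_one, hd.map_eq_self hσ]

lemma pow_mul_cyclicNorm_mul_sub_map (hd : IsTwistParameter σ α β d r) (hσ : ∀ x, σ^[5] x = x) :
    r ^ 8 * cyclicNorm σ 5 (σ β * β - σ α) = (1 + r + r ^ 2) ^ 5 := by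
  have hr := hd.map_eq_self hσ
  have hσα := congrArg σ hd.mul_left
  have hσβ := congrArg σ hd.mul_right
  simp only [map_mul, map_neg, map_add, map_one, hr] at hσα hσβ
  have h : r ^ 2 * (σ β * β - σ α) = (1 + r + r ^ 2) * (σ d * σ (σ d)) := by
    linear_combination r * β * hσβ - (1 + r) * σ (σ d) * hd.mul_right - r * hσα
  have hN := congrArg (cyclicNorm σ 5) h
  simp only [map_mul, map_pow, cyclicNorm_of_map_eq_self hr,
    cyclicNorm_of_map_eq_self (hd.map_one_add_add_sq hσ), cyclicNorm_map (hσ _), hd.norm_eq] at hN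
  apply mul_left_cancel₀ (pow_ne_zero 2 hd.ne_zero)
  linear_combination hN

lemma pow_mul_cyclicNorm_mul_sub_one (hd : IsTwistParameter σ α β d r) (hσ : ∀ x, σ^[5] x = x) :
    r ^ 10 * cyclicNorm σ 5 (σ β * (σ (σ (σ α)) * α) - 1) = -(1 + r + r ^ 2) ^ 5 := by
  have hr := hd.map_eq_self hσ
  have hσβ := congrArg σ hd.mul_right
  have hσ₃α := congrArg (fun z ↦ σ (σ (σ z))) hd.mul_left
  simp only [map_mul, map_neg, map_add, map_one, hr] at hσβ hσ₃α
  have hnorm := hd.norm_eq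
  rw [cyclicNorm_five] at hnorm
  have h : r ^ 2 * (σ β * (σ (σ (σ α)) * α) - 1) = -(1 + r + r ^ 2) := by
    apply mul_left_cancel₀ hd.ne_zero
    linear_combination r ^ 2 * σ (σ (σ α)) * α * hσβ
      - (1 + r) * σ (σ d) * r * α * hσ₃α
      - (1 + r) * σ (σ d) * σ (σ (σ d)) * σ (σ (σ (σ d))) * hd.mul_left - (1 + r) * hnorm
  have hσc : σ (-(1 + r + r ^ 2)) = -(1 + r + r ^ 2) := by
    rw [map_neg, hd.map_one_add_add_sq hσ]
  have hN := congrArg (cyclicNorm σ 5) h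
  simp only [map_mul, map_pow, cyclicNorm_of_map_eq_self hr, cyclicNorm_of_map_eq_self hσc] at hN
  linear_combination hN

lemma norm_mul_norm_ne (hd : IsTwistParameter σ α β d r) (hσ : ∀ x, σ^[5] x = x) :
    cyclicNorm σ 5 (σ^[3] α) * cyclicNorm σ 5 (σ β * β - σ α) ≠
      cyclicNorm σ 5 (σ β * (σ^[3] α * α) - 1) := by
  simp only [Function.iterate_succ_apply, Function.iterate_zero_apply, cyclicNorm_map (hσ _)]
  intro h
  have hprod : (1 + r) * (1 + r + r ^ 2) ^ 5 = 0 := by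
    linear_combination r ^ 11 * h
      - r ^ 8 * cyclicNorm σ 5 (σ β * β - σ α) * hd.pow_mul_cyclicNorm_left hσ
      - hd.pow_mul_cyclicNorm_mul_sub_map hσ + r * hd.pow_mul_cyclicNorm_mul_sub_one hσ
  exact mul_ne_zero hd.one_add_ne_zero (pow_ne_zero 5 hd.one_add_add_sq_ne_zero) hprod

end IsTwistParameter

end TwistParameter

section Frobenius

open Polynomial in
lemma mem_subfield_iff_pow_card_eq_self {K : Type*} [Field K] (F : Subfield K) [Finite F] {x : K} :
    x ∈ F ↔ x ^ Nat.card F = x := by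
  have := Fintype.ofFinite F
  refine ⟨fun hx ↦ ?_, fun hx ↦ ?_⟩
  · rw [Nat.card_eq_fintype_card]
    exact congrArg Subtype.val (FiniteField.pow_card (⟨x, hx⟩ : F))
  · have hroot : ((X ^ Nat.card F - X : F[X]).map F.subtype).IsRoot x := by
      simp only [Polynomial.map_sub, Polynomial.map_pow, map_X, IsRoot.def, eval_sub, eval_pow,
        eval_X, hx, sub_self]
    obtain ⟨y, rfl⟩ := Polynomial.splits_X_pow_nat_card_sub_X.mem_range_of_isRoot
      (FiniteField.X_pow_card_sub_X_ne_zero F Finite.one_lt_card) hroot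
    exact y.2

lemma exists_frobenius {K : Type*} [Field K] [Finite K] (F : Subfield K) {n : ℕ}
    (hn : Nat.card K = Nat.card F ^ n) :
    ∃ σ : K →+* K, (∀ x, σ x = x ^ Nat.card F) ∧ (∀ x, σ^[n] x = x) ∧ ∀ x, x ∈ F ↔ σ x = x := by
  have := Fintype.ofFinite F
  have := Fintype.ofFinite K
  have hσ (x : K) : (FiniteField.frobeniusAlgHom F K : K →+* K) x = x ^ Nat.card F := by
    rw [Nat.card_eq_fintype_card]
    exact FiniteField.frobeniusAlgHom_apply F K x
  refine ⟨_, hσ, fun x ↦ ?_, fun x ↦ ?_⟩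
  · rw [iterate_eq_pow hσ, ← hn, Nat.card_eq_fintype_card, FiniteField.pow_card]
  · rw [mem_subfield_iff_pow_card_eq_self, hσ]

lemma criticalForm_eq_pow {K : Type*} [Field K] {σ : K →+* K} {q : ℕ} (hσ : ∀ x, σ x = x ^ q)
    (α β : K) :
    criticalForm σ α β =
      α ^ q ^ 4 * β ^ (q ^ 2 + q + 1) - α ^ (q ^ 4 + q ^ 2) * β - α ^ (q ^ 4 + q) * β ^ q ^ 2
        + α ^ (1 + q + q ^ 2 + q ^ 3 + q ^ 4) - β ^ q * α ^ (q ^ 3 + 1) + 1 := by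
  simp only [criticalForm, cyclicNorm_eq_pow hσ, iterate_eq_pow hσ, hσ, Finset.sum_range_succ,
    Finset.sum_range_zero, zero_add, pow_add, pow_zero, pow_one]

end Frobenius

theorem stmt_9_general {K : Type*} [Field K] (σ : K →+* K) (hσ : ∀ x, σ^[5] x = x) (α β : K)
    (hβ : β ≠ 0) (hne : σ α ≠ σ β * β) (h : criticalForm σ α β = 0) :
    IsScattered σ (twistedTmap σ α β) ∧
      cyclicNorm σ 5 (σ^[3] α) * cyclicNorm σ 5 (σ β * β - σ α) ≠
        cyclicNorm σ 5 (σ β * (σ^[3] α * α) - 1) := by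
  obtain ⟨d, r, hd⟩ := exists_isTwistParameter hσ hβ hne h
  exact ⟨hd.isScattered hσ hne, hd.norm_mul_norm_ne hσ⟩

theorem stmt_9 (q : ℕ) (hq : ∃ p n : ℕ, Nat.Prime p ∧ 0 < n ∧ q = p ^ n)
    (K : Type*) [Field K] (F : Subfield K)
    (hFcard : Nat.card F = q) (hKcard : Nat.card K = q ^ 5)
    (α β : K) (hαβ : α * β ≠ 0) (hne : α ^ q ≠ β ^ (q + 1))
    (hne2 : β ^ q * α ^ (q ^ 3 + 1) ≠ 1)
    (heq : α ^ q ^ 4 * β ^ (q ^ 2 + q + 1) - α ^ (q ^ 4 + q ^ 2) * β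
        - α ^ (q ^ 4 + q) * β ^ q ^ 2 + α ^ (1 + q + q ^ 2 + q ^ 3 + q ^ 4)
        - β ^ q * α ^ (q ^ 3 + 1) + 1 = 0) :
    IsMaxScattered q F α β ↔
      (α ^ q ^ 3) ^ (1 + q + q ^ 2 + q ^ 3 + q ^ 4) *
          (β ^ (q + 1) - α ^ q) ^ (1 + q + q ^ 2 + q ^ 3 + q ^ 4) ≠
        (β ^ q * α ^ (q ^ 3 + 1) - 1) ^ (1 + q + q ^ 2 + q ^ 3 + q ^ 4) := by
  obtain ⟨p, n, hp, -, rfl⟩ := hq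
  have : Finite K := Nat.finite_of_card_ne_zero (hKcard ▸ pow_ne_zero 5 (pow_ne_zero n hp.ne_zero))
  obtain ⟨σ, hσ, hσ₅, hfixed⟩ := exists_frobenius F (hFcard.symm ▸ hKcard)
  rw [hFcard] at hσ
  have hne' : σ α ≠ σ β * β := by simpa only [hσ, pow_succ] using hne
  obtain ⟨hscattered, hnorm⟩ := stmt_9_general σ hσ₅ α β (right_ne_zero_of_mul hαβ) hne'
    ((criticalForm_eq_pow hσ α β).trans heq)
  refine iff_of_true ((isMaxScattered_iff_isScattered hσ hfixed).mpr hscattered) ?_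
  simpa only [cyclicNorm_eq_pow hσ, iterate_eq_pow hσ, hσ, Finset.sum_range_succ,
    Finset.sum_range_zero, zero_add, pow_zero, pow_one, ← pow_succ] using hnorm
end

section
/- Let β ∈ K with β ≠ 0, let λ ∈ F with λ ≠ 0 and λ ≠ 1, and let α ∈ K satisfy α^q = λ β^{q+1}. If λ^5 N(β)^2 + λ(1 − 3λ) N(β) + 1 = 0, then L_{α,β} is maximum scattered. -/
/-!
Let `σ` be the Frobenius `x ↦ x ^ q`, so that `σ⁵ = 1`. Linear dependence of `T x` and `T y` is a
linear relation `d + α σ(d) = β e` between the Plücker coordinates `d = x σ(y) - σ(x) y` and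
`e = x σ²(y) - σ²(x) y` of the `2 × 5` Moore matrix of `x, y`. Eliminating `e` turns the Plücker
relation into a quadratic equation for `u = d / β`; with its conjugates it cuts out, in general, a
quintic curve of genus one in `ℙ⁴`. The hypothesis on `λ` and `N(β)` says exactly that `λ = t s`,
`t + s = 1` and `N(β) t s⁴ = -1` for some `t, s ∈ F`. The curve then degenerates to a pentagon of
lines, given by the equations `Zᵢ Zᵢ₊₂ = 0` for the conjugates `Zᵢ = σⁱ(Z)` of a single linear form
`Z`. At our point all `Zᵢ` are conjugate to each other, hence they all vanish, and they are linearly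
independent since `λ ≠ 1`. So `u = 0`, that is, `σ(y / x) = y / x`.
-/

theorem exists_add_eq_one_mul_eq {k : Type*} [Field k] {l N : k} (hl : l ≠ 1)
    (h : l ^ 5 * N ^ 2 + l * (1 - 3 * l) * N + 1 = 0) :
    ∃ t s : k, t + s = 1 ∧ t * s = l ∧ N * t * s ^ 4 = -1 := by
  have hl' : 1 - l ≠ 0 := sub_ne_zero.mpr hl.symm
  -- The conclusion forces `t ^ 3 = -N l ^ 4`, while `t ^ 2 = t - l` gives `t ^ 3 = (1 - l) t - l`.
  obtain ⟨t, ht⟩ : ∃ t, (1 - l) * t = l - N * l ^ 4 :=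
    ⟨(l - N * l ^ 4) / (1 - l), mul_div_cancel₀ _ hl'⟩
  have hts : t * (1 - t) = l := by
    apply mul_left_cancel₀ (pow_ne_zero 2 hl')
    linear_combination (1 - l - (1 - l) * t - (l - N * l ^ 4)) * ht - l ^ 3 * h
  have ht0 : t ≠ 0 := by
    rintro rfl
    have hl0 : l = 0 := by linear_combination -hts
    simp [hl0] at h
  have ht3 : t ^ 3 = -(N * l ^ 4) := by linear_combination ht - (t + 1) * hts
  refine ⟨t, 1 - t, by ring, hts, mul_left_cancel₀ (pow_ne_zero 3 ht0) ?_⟩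
  calc t ^ 3 * (N * t * (1 - t) ^ 4) = N * (t * (1 - t)) ^ 4 := by ring
    _ = t ^ 3 * -1 := by rw [hts, ht3]; ring

theorem fst_mul_snd_eq_of_not_linearIndependent {R : Type*} [CommRing R] [NoZeroDivisors R]
    {v w : R × R}
    (h : ¬ LinearIndependent R ![v, w]) : v.1 * w.2 = v.2 * w.1 := by
  by_contra hdet
  refine h (LinearIndependent.pair_iff.mpr fun a b hab ↦ ?_)
  have h₁ : a * v.1 + b * w.1 = 0 := congrArg Prod.fst hab
  have h₂ : a * v.2 + b * w.2 = 0 := congrArg Prod.snd hab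
  constructor <;> apply (mul_eq_zero.mp ?_).resolve_right (sub_ne_zero.mpr hdet)
  · linear_combination w.2 * h₁ - w.1 * h₂
  · linear_combination v.1 * h₂ - v.2 * h₁

section CommRing

variable {R : Type*} [CommRing R] (σ : R →+* R)

/-- The `2 × 2` minor in columns `0` and `i` of the Moore matrix with rows `(σʲ x)ⱼ` and
`(σʲ y)ⱼ`. If `σ` has order five, every minor is up to sign a conjugate of the one for `i = 1` or
for `i = 2`. -/
def mooreMinor (i : ℕ) (x y : R) : R :=
  x * σ^[i] y - σ^[i] x * y

/-- The norm of `β` for the cyclic group of order five generated by `σ`. -/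
def quinticNorm (β : R) : R :=
  ∏ i ∈ Finset.range 5, σ^[i] β

/-- The map `T_{α,β}` with an arbitrary endomorphism `σ` in place of the Frobenius. -/
def twistedMap (α β : R) : R →+ R × R :=
  AddMonoidHom.mk' (fun x ↦ (x - α * σ^[2] x, σ x - β * σ^[2] x)) fun x y ↦ by
    ext <;> simp only [map_add, iterate_map_add, Prod.mk_add_mk] <;> ring

theorem mul_mooreMinor_two_eq_of_cross_eq {α β x y : R}
    (h : (twistedMap σ α β x).1 * (twistedMap σ α β y).2 =
      (twistedMap σ α β x).2 * (twistedMap σ α β y).1) :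
    β * mooreMinor σ 2 x y = mooreMinor σ 1 x y + α * σ (mooreMinor σ 1 x y) := by
  simp only [twistedMap, AddMonoidHom.mk'_apply] at h
  simp only [mooreMinor, Function.iterate_succ_apply, Function.iterate_zero_apply, map_sub,
    map_mul] at h ⊢
  linear_combination -h

/-- The value of `mooreMinor σ 2` dictated by `mooreMinor σ 1 = β * u` when `T x` and `T y` are
dependent. -/
def secondMinor (l β u : R) : R :=
  u + l * (σ^[4] β * σ β) * σ u

/-- The quadric in `u` obtained from the Plücker relation by writing both minors in terms
of `u`. -/
def pluckerQuadric (l β u : R) : R :=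
  β * u * σ^[2] (β * u) - secondMinor σ l β u * σ (secondMinor σ l β u) -
    σ^[3] (secondMinor σ l β u) * σ (β * u)

/-- A linear form whose conjugates cut out the sides of the pentagon to which the Plücker quadrics
degenerate: the side numbered `i` is where all but two consecutive conjugates vanish. -/
def pentagonForm (β t s u : R) : R :=
  t * u - s ^ 2 * (σ^[4] β * σ β) * σ u + s ^ 5 * (σ^[4] β * σ β * β * σ^[2] β) * σ^[2] u -
    s ^ 2 * σ β * σ^[3] u - t * s ^ 3 * (σ β * σ^[2] β * σ^[4] β) * σ^[4] u

variable {σ} (hσ : ∀ x, σ^[5] x = x)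
include hσ

theorem apply_quinticNorm (β : R) : σ (quinticNorm σ β) = quinticNorm σ β := by
  simp only [quinticNorm, map_prod, ← Function.iterate_succ_apply' (⇑σ)]
  rw [Finset.prod_range_succ, Finset.prod_range_succ' (fun i ↦ σ^[i] β), hσ,
    Function.iterate_zero_apply]

theorem mooreMinor_plucker (x y : R) :
    mooreMinor σ 1 x y * σ^[2] (mooreMinor σ 1 x y) =
      mooreMinor σ 2 x y * σ (mooreMinor σ 2 x y) +
        σ^[3] (mooreMinor σ 2 x y) * σ (mooreMinor σ 1 x y) := by
  simp only [Function.iterate_succ_apply, Function.iterate_zero_apply] at hσ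
  simp only [mooreMinor, Function.iterate_succ_apply, Function.iterate_zero_apply, map_sub,
    map_mul, hσ]
  ring

theorem pluckerQuadric_eq_zero {l β u x y : R} (h₁ : mooreMinor σ 1 x y = β * u)
    (h₂ : mooreMinor σ 2 x y = secondMinor σ l β u) : pluckerQuadric σ l β u = 0 := by
  rw [pluckerQuadric, ← h₁, ← h₂]
  linear_combination mooreMinor_plucker hσ x y

variable {β t s : R} (hs : σ s = s) (hts : t + s = 1)
  (hN : quinticNorm σ β * t * s ^ 4 = -1)
include hs hts hN

theorem pentagonForm_mul_conj (u : R) :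
    t * (pentagonForm σ β t s u * σ^[2] (pentagonForm σ β t s u)) =
      -(t * s ^ 4 * (σ β * σ^[3] β * σ^[4] β)) * pluckerQuadric σ (t * s) β u
      - t * s ^ 4 * (σ β * σ^[4] β) * σ (pluckerQuadric σ (t * s) β u)
      - s ^ 3 * σ β * σ^[2] (pluckerQuadric σ (t * s) β u)
      + t * s ^ 7 * (σ β ^ 2 * σ^[2] β * σ^[3] β * σ^[4] β) *
        σ^[3] (pluckerQuadric σ (t * s) β u)
      - t ^ 2 * s ^ 5 * (σ β * σ^[2] β * σ^[3] β * σ^[4] β) *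
        σ^[4] (pluckerQuadric σ (t * s) β u) := by
  obtain rfl : t = 1 - s := eq_sub_of_add_eq hts
  simp only [Function.iterate_succ_apply, Function.iterate_zero_apply] at hσ
  simp only [quinticNorm, Finset.prod_range_succ, Finset.prod_range_zero,
    Function.iterate_succ_apply, Function.iterate_zero_apply] at hN
  simp only [pentagonForm, pluckerQuadric, secondMinor, Function.iterate_succ_apply,
    Function.iterate_zero_apply, map_sub, map_add, map_mul, map_pow, map_one, hσ, hs]
  generalize σ (σ (σ (σ β))) = b₄ at *
  generalize σ (σ (σ β)) = b₃ at *
  generalize σ (σ β) = b₂ at *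
  generalize σ β = b₁ at *
  generalize σ (σ (σ (σ u))) = u₄
  generalize σ (σ (σ u)) = u₃
  generalize σ (σ u) = u₂
  generalize σ u = u₁
  -- The factor of `hN` is the difference of the two sides divided by `N(β) t s⁴ + 1`.
  linear_combination ((1 - s) ^ 3 * u * u₂ - s ^ 2 * (1 - s) ^ 2 * b₃ * u ^ 2
    - s ^ 2 * (1 - s + s ^ 2) * b₁ * u₂ * u₃
    - s ^ 2 * (1 - s) * (1 - s + s ^ 2) * b₁ * b₄ * u₁ * u₂
    - s ^ 2 * (1 - s + s ^ 3) * b₁ * b₃ * u * u₃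
    - s ^ 3 * (1 - s) ^ 3 * b₁ * b₃ * b₄ * u * u₁
    + s ^ 4 * (1 - s + s ^ 2) * b₁ * b₂ * b₄ * u₂ * u₄
    + s ^ 5 * (1 - s) ^ 2 * b₁ * b₂ * b₃ * b₄ * u * u₄) * hN

theorem pentagonForm_conj_combination (u : R) :
    (1 - t * s) * u =
      t * (t * pentagonForm σ β t s u
        + t * s ^ 2 * (σ β * σ^[4] β) * σ (pentagonForm σ β t s u)
        + t * s ^ 4 * (β * σ β * σ^[2] β * σ^[4] β) * σ^[2] (pentagonForm σ β t s u)
        - s ^ 2 * σ β * σ^[3] (pentagonForm σ β t s u)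
        + t * s ^ 3 * (σ β * σ^[2] β * σ^[4] β) * σ^[4] (pentagonForm σ β t s u)) := by
  obtain rfl : t = 1 - s := eq_sub_of_add_eq hts
  simp only [Function.iterate_succ_apply, Function.iterate_zero_apply] at hσ
  simp only [quinticNorm, Finset.prod_range_succ, Finset.prod_range_zero,
    Function.iterate_succ_apply, Function.iterate_zero_apply] at hN
  simp only [pentagonForm, Function.iterate_succ_apply,
    Function.iterate_zero_apply, map_sub, map_add, map_mul, map_pow, map_one, hσ, hs]
  linear_combination (s * (2 - 2 * s + s ^ 2) * u + 2 * s ^ 2 * (1 - s) ^ 2 * σ β * σ (σ (σ u))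
    + s ^ 3 * (1 - s) * (1 - 2 * s) * σ β * σ (σ (σ (σ β))) * σ u
    - s ^ 5 * (1 - s) * σ β * σ (σ β) * σ (σ (σ (σ β))) * σ (σ (σ (σ u)))) * hN

end CommRing

section Field

variable {K : Type*} [Field K] {σ : K →+* K}

theorem twistedMap_injective {α β l : K} (hβ : β ≠ 0) (hl : l ≠ 1) (hα : σ α = l * (β * σ β)) :
    Function.Injective (twistedMap σ α β) := by
  refine (injective_iff_map_eq_zero _).mpr fun x hx ↦ ?_
  have h₁ : x - α * σ (σ x) = 0 := congrArg Prod.fst hx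
  have h₂ : σ x - β * σ (σ x) = 0 := congrArg Prod.snd hx
  have h₁' := congrArg σ h₁
  have h₂' := congrArg σ h₂
  simp only [map_sub, map_mul, map_zero, hα] at h₁' h₂'
  have key : (1 - l) * (β * σ β * σ (σ (σ x))) = 0 := by
    linear_combination h₁' - h₂ - β * h₂'
  simpa [sub_eq_zero, hl.symm, hβ] using key

variable (hσ : ∀ x, σ^[5] x = x)
include hσ

theorem eq_zero_of_pentagonForm_eq_zero {β t s u : K} (hs : σ s = s) (hts : t + s = 1)
    (hN : quinticNorm σ β * t * s ^ 4 = -1) (hl : t * s ≠ 1)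
    (hu : pentagonForm σ β t s u = 0) : u = 0 := by
  have h := pentagonForm_conj_combination hσ hs hts hN u
  simp only [hu, map_zero, iterate_map_zero, mul_zero, add_zero, sub_zero] at h
  exact (mul_eq_zero.mp h).resolve_left (sub_ne_zero.mpr hl.symm)

theorem eq_zero_of_pluckerQuadric_eq_zero {β t s u : K} (hs : σ s = s) (hts : t + s = 1)
    (hN : quinticNorm σ β * t * s ^ 4 = -1) (hl : t * s ≠ 1)
    (hu : pluckerQuadric σ (t * s) β u = 0) : u = 0 := by
  apply eq_zero_of_pentagonForm_eq_zero hσ hs hts hN hl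
  have ht0 : t ≠ 0 := by rintro rfl; simp at hN
  have h := pentagonForm_mul_conj hσ hs hts hN u
  simpa [hu, ht0] using h

theorem exists_fixed_add_eq_one_mul_eq {β l : K} (hl : σ l = l) (hl1 : l ≠ 1)
    (h : l ^ 5 * quinticNorm σ β ^ 2 + l * (1 - 3 * l) * quinticNorm σ β + 1 = 0) :
    ∃ t s : K, σ s = s ∧ t + s = 1 ∧ t * s = l ∧ quinticNorm σ β * t * s ^ 4 = -1 := by
  let k := σ.eqLocusField (RingHom.id K)
  let l' : k := ⟨l, hl⟩
  let N : k := ⟨quinticNorm σ β, apply_quinticNorm hσ β⟩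
  obtain ⟨t, s, hts, hl', hN⟩ := exists_add_eq_one_mul_eq (l := l') (N := N)
    (fun h ↦ hl1 (congrArg Subtype.val h)) (Subtype.ext h)
  exact ⟨t, s, s.2, congrArg Subtype.val hts, congrArg Subtype.val hl', congrArg Subtype.val hN⟩

theorem mooreMinor_one_eq_zero {α β l x y : K} (hβ : β ≠ 0) (hl : σ l = l) (hl1 : l ≠ 1)
    (hα : σ α = l * (β * σ β))
    (hsh : l ^ 5 * quinticNorm σ β ^ 2 + l * (1 - 3 * l) * quinticNorm σ β + 1 = 0)
    (h : β * mooreMinor σ 2 x y = mooreMinor σ 1 x y + α * σ (mooreMinor σ 1 x y)) :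
    mooreMinor σ 1 x y = 0 := by
  have hα' : α = l * (β * σ^[4] β) := by
    apply σ.injective
    rw [hα, map_mul, map_mul, hl, ← Function.iterate_succ_apply' (⇑σ), hσ, mul_comm β]
  obtain ⟨u, hu⟩ : ∃ u, mooreMinor σ 1 x y = β * u := ⟨_, (mul_div_cancel₀ _ hβ).symm⟩
  have hu₂ : mooreMinor σ 2 x y = secondMinor σ l β u := by
    apply mul_left_cancel₀ hβ
    rw [h, hu, hα', map_mul, secondMinor]
    ring
  obtain ⟨t, s, hs, hts, rfl, hN⟩ := exists_fixed_add_eq_one_mul_eq hσ hl hl1 hsh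
  have hu0 : u = 0 := eq_zero_of_pluckerQuadric_eq_zero hσ hs hts hN hl1
    (pluckerQuadric_eq_zero hσ hu hu₂)
  rw [hu, hu0, mul_zero]

theorem stmt_12_general {α β l : K} (hl : σ l = l) (hl1 : l ≠ 1) (hα : σ α = l * (β * σ β))
    (hsh : l ^ 5 * quinticNorm σ β ^ 2 + l * (1 - 3 * l) * quinticNorm σ β + 1 = 0) :
    Function.Injective (twistedMap σ α β) ∧
      ∀ x y : K, x ≠ 0 → ¬ LinearIndependent K ![twistedMap σ α β x, twistedMap σ α β y] →
        σ (y / x) = y / x := by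
  have hβ : β ≠ 0 := by
    rintro rfl
    simp [quinticNorm] at hsh
  refine ⟨twistedMap_injective hβ hl1 hα, fun x y hx hdep ↦ ?_⟩
  have hminor : x * σ y - σ x * y = 0 := mooreMinor_one_eq_zero hσ hβ hl hl1 hα hsh
    (mul_mooreMinor_two_eq_of_cross_eq σ (fst_mul_snd_eq_of_not_linearIndependent hdep))
  rw [map_div₀, div_eq_div_iff ((map_ne_zero σ).mpr hx) hx]
  linear_combination hminor

end Field

section FiniteField

variable {K : Type*} [Field K] {F : Subfield K} [Fintype F]

theorem iterate_frobeniusAlgHom_apply (i : ℕ) (x : K) :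
    (FiniteField.frobeniusAlgHom F K)^[i] x = x ^ Fintype.card F ^ i := by
  rw [FiniteField.coe_frobeniusAlgHom, pow_iterate]

open Polynomial in
theorem mem_of_pow_card_eq_self {x : K} (hx : x ^ Fintype.card F = x) : x ∈ F := by
  have hsplits : (X ^ Fintype.card F - X : F[X]).Splits := by
    rw [splits_iff_card_roots, FiniteField.roots_X_pow_card_sub_X, ← Finset.card_def,
      Finset.card_univ, FiniteField.X_pow_card_sub_X_natDegree_eq F Fintype.one_lt_card]
  have hroot : x ∈ ((X ^ Fintype.card F - X : F[X]).map F.subtype).roots := by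
    simp [hx, FiniteField.X_pow_card_sub_X_ne_zero K (Fintype.one_lt_card (α := F))]
  rw [hsplits.roots_map] at hroot
  obtain ⟨a, -, rfl⟩ := Multiset.mem_map.mp hroot
  exact a.2

theorem iterate_frobeniusAlgHom_eq_self [Fintype K] {n : ℕ}
    (h : Fintype.card K = Fintype.card F ^ n) (x : K) :
    (FiniteField.frobeniusAlgHom F K)^[n] x = x := by
  rw [iterate_frobeniusAlgHom_apply, ← h, FiniteField.pow_card]

theorem quinticNorm_frobeniusAlgHom (β : K) :
    quinticNorm (FiniteField.frobeniusAlgHom F K : K →+* K) β =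
      β ^ (1 + Fintype.card F + Fintype.card F ^ 2 + Fintype.card F ^ 3 + Fintype.card F ^ 4) := by
  simp only [quinticNorm, RingHom.coe_coe, iterate_frobeniusAlgHom_apply,
    Finset.prod_pow_eq_pow_sum, Finset.sum_range_succ, Finset.sum_range_zero, zero_add, pow_zero,
    pow_one]

theorem Tmap_eq_twistedMap (α β x : K) :
    Tmap (Fintype.card F) α β x =
      twistedMap (FiniteField.frobeniusAlgHom F K : K →+* K) α β x := by
  simp [Tmap, twistedMap, iterate_frobeniusAlgHom_apply]

end FiniteField

theorem stmt_12 (q : ℕ) (hq : ∃ p n : ℕ, Nat.Prime p ∧ 0 < n ∧ q = p ^ n)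
    (K : Type*) [Field K] (F : Subfield K)
    (hFcard : Nat.card F = q) (hKcard : Nat.card K = q ^ 5)
    (β : K) (hβ : β ≠ 0) (l : K) (hlF : l ∈ F) (hl0 : l ≠ 0) (hl1 : l ≠ 1)
    (α : K) (hα : α ^ q = l * β ^ (q + 1))
    (hsh : l ^ 5 * (β ^ (1 + q + q ^ 2 + q ^ 3 + q ^ 4)) ^ 2 +
        l * (1 - 3 * l) * β ^ (1 + q + q ^ 2 + q ^ 3 + q ^ 4) + 1 = 0) :
    IsMaxScattered q F α β := by
  have hq0 : q ≠ 0 := by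
    obtain ⟨p, n, hp, -, rfl⟩ := hq
    exact pow_ne_zero n hp.ne_zero
  have : Finite K := Nat.finite_of_card_ne_zero (by rw [hKcard]; exact pow_ne_zero 5 hq0)
  have := Fintype.ofFinite K
  have := Fintype.ofFinite F
  rw [Nat.card_eq_fintype_card] at hFcard hKcard
  subst hFcard
  rw [pow_succ'] at hα
  rw [← quinticNorm_frobeniusAlgHom] at hsh
  have hσ := iterate_frobeniusAlgHom_eq_self hKcard
  have hl : FiniteField.frobeniusAlgHom F K l = l :=
    (FiniteField.frobeniusAlgHom F K).commutes ⟨l, hlF⟩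
  obtain ⟨hinj, hdep⟩ := stmt_12_general hσ hl hl1 hα hsh
  simp only [IsMaxScattered, funext (Tmap_eq_twistedMap α β)]
  exact ⟨hinj, fun x y hx _ h ↦ mem_of_pow_card_eq_self (hdep x y hx h)⟩
end
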